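/- arXiv:1707.03643 — 2 statements merged into one kernel-verified Lean document; each statement's English description precedes it below -/
import Mathlib

section
/- For all real numbers ξ, ζ, φ and every real r, the normalized integral (1/(2π)) ∫₀^{2π} cos(θ − ξ) cos(θ − ζ) e^{i r cos(θ − φ)} dθ equals (1/2) cos(ξ − ζ) J₀(r) + (i²/2) cos(2φ − ξ − ζ) J₂(r) = (1/2) cos(ξ − ζ) J₀(r) − (1/2) cos(2φ − ξ − ζ) J₂(r), where the integral is over θ ∈ [0, 2π] and the value is a complex number (so in particular the integral is real). -/
/-!
After the shift `θ = t + φ - π/2` the phase `cos (θ - φ)` becomes `sin t`, while the product formula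
turns the amplitude into `(cos (ξ - ζ) - cos (2 t + α)) / 2` with `α = 2 φ - ξ - ζ`. Periodicity moves
the range of integration to `[-π, π]`, and folding `t` with `-t` leaves, on `[0, π]`,
`cos (ξ - ζ) cos (r sin t) - cos α cos (2 t) cos (r sin t) + i sin α sin (2 t) sin (r sin t)`.
The last term integrates to zero by the reflection `t ↦ π - t` (`integral_sin_two_mul_sin`).
The first is Bessel's integral for `J₀`; the second is the one for `J₂`, since the remaining part
`sin (2 t) sin (r sin t)` of `cos (2 t - r sin t)` also integrates to zero.
-/

/-- Bessel function of the first kind of integer order `n`, via Bessel's integral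
`Jₙ(z) = (1/π) ∫₀^π cos(nθ − z sin θ) dθ`. -/
noncomputable def besselJ (n : ℕ) (z : ℝ) : ℝ :=
  (1 / Real.pi) * ∫ θ in (0:ℝ)..Real.pi, Real.cos (n * θ - z * Real.sin θ)

lemma integral_sin_two_mul_sin (r : ℝ) :
    ∫ t in (0:ℝ)..Real.pi, Real.sin (2 * t) * Real.sin (r * Real.sin t) = 0 := by
  have h := intervalIntegral.integral_comp_sub_left (a := 0) (b := Real.pi)
    (fun t => Real.sin (2 * t) * Real.sin (r * Real.sin t)) Real.pi
  have e : ∀ t : ℝ, Real.sin (2 * (Real.pi - t)) * Real.sin (r * Real.sin (Real.pi - t))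
      = -(Real.sin (2 * t) * Real.sin (r * Real.sin t)) := by
    intro t
    rw [Real.sin_pi_sub, mul_sub, Real.sin_two_pi_sub]
    ring
  simp only [e, intervalIntegral.integral_neg, sub_self, sub_zero] at h
  linarith

lemma pi_mul_besselJ_zero (r : ℝ) :
    ∫ t in (0:ℝ)..Real.pi, Real.cos (r * Real.sin t) = Real.pi * besselJ 0 r := by
  simp [besselJ, Real.pi_ne_zero]

lemma pi_mul_besselJ_two (r : ℝ) :
    ∫ t in (0:ℝ)..Real.pi, Real.cos (2 * t) * Real.cos (r * Real.sin t)
      = Real.pi * besselJ 2 r := by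
  have h : ∫ t in (0:ℝ)..Real.pi, Real.cos ((2 : ℕ) * t - r * Real.sin t)
      = ∫ t in (0:ℝ)..Real.pi, Real.cos (2 * t) * Real.cos (r * Real.sin t) := by
    simp only [Nat.cast_ofNat, Real.cos_sub]
    rw [intervalIntegral.integral_add, integral_sin_two_mul_sin, add_zero] <;>
      exact Continuous.intervalIntegrable (by fun_prop) _ _
  rw [besselJ, h]
  field_simp [Real.pi_ne_zero]

lemma integral_symm_eq_fold (G : ℝ → ℂ) (hG : Continuous G) (a : ℝ) :
    ∫ t in (-a)..a, G t = ∫ t in (0:ℝ)..a, (G t + G (-t)) := by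
  have hG' : Continuous fun t => G (-t) := hG.comp continuous_neg
  rw [intervalIntegral.integral_add (hG.intervalIntegrable _ _) (hG'.intervalIntegrable _ _),
    intervalIntegral.integral_comp_neg (f := G), neg_zero, add_comm,
    intervalIntegral.integral_add_adjacent_intervals] <;>
  exact hG.intervalIntegrable _ _

/-- The shifted integrand, with amplitude expanded by the product and addition formulas. -/
lemma integrand_shift (ξ ζ φ r t : ℝ) :
    ((Real.cos (t + (φ - Real.pi / 2) - ξ) * Real.cos (t + (φ - Real.pi / 2) - ζ) : ℝ) : ℂ) *
        Complex.exp (Complex.I * (r : ℂ) * (Real.cos (t + (φ - Real.pi / 2) - φ) : ℝ)) =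
      (((Real.cos (ξ - ζ) - (Real.cos (2 * t) * Real.cos (2 * φ - ξ - ζ)
          - Real.sin (2 * t) * Real.sin (2 * φ - ξ - ζ))) / 2 : ℝ) : ℂ) *
        ((Real.cos (r * Real.sin t) : ℂ) + (Real.sin (r * Real.sin t) : ℂ) * Complex.I) := by
  congr 1
  · congr 1
    have h := Real.two_mul_cos_mul_cos (t + (φ - Real.pi / 2) - ξ) (t + (φ - Real.pi / 2) - ζ)
    rw [show t + (φ - Real.pi / 2) - ξ - (t + (φ - Real.pi / 2) - ζ) = -(ξ - ζ) by ring,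
      show t + (φ - Real.pi / 2) - ξ + (t + (φ - Real.pi / 2) - ζ)
        = 2 * t + (2 * φ - ξ - ζ) - Real.pi by ring,
      Real.cos_neg, Real.cos_sub_pi, Real.cos_add] at h
    linarith
  · rw [show t + (φ - Real.pi / 2) - φ = t - Real.pi / 2 by ring, Real.cos_sub_pi_div_two,
      Complex.ofReal_cos, Complex.ofReal_sin (r * Real.sin t), ← Complex.exp_mul_I]
    push_cast
    ring_nf

/-- For all real `ξ ζ φ` and real `r`,
`(1/(2π)) ∫₀^{2π} cos(θ−ξ) cos(θ−ζ) e^{i r cos(θ−φ)} dθ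
  = (1/2) cos(ξ−ζ) J₀(r) + (i²/2) cos(2φ−ξ−ζ) J₂(r)
  = (1/2) cos(ξ−ζ) J₀(r) − (1/2) cos(2φ−ξ−ζ) J₂(r)`,
as complex numbers (in particular the integral is real). -/
theorem stmt0 (ξ ζ φ r : ℝ) :
    (1 / (2 * Real.pi) : ℂ) *
        ∫ θ in (0:ℝ)..(2 * Real.pi),
          ((Real.cos (θ - ξ) * Real.cos (θ - ζ) : ℝ) : ℂ) *
            Complex.exp (Complex.I * (r : ℂ) * (Real.cos (θ - φ) : ℝ)) =
      (1 / 2 : ℂ) * (Real.cos (ξ - ζ) : ℂ) * (besselJ 0 r : ℂ) +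
        (Complex.I ^ 2 / 2) * (Real.cos (2 * φ - ξ - ζ) : ℂ) * (besselJ 2 r : ℂ) ∧
    (1 / 2 : ℂ) * (Real.cos (ξ - ζ) : ℂ) * (besselJ 0 r : ℂ) +
        (Complex.I ^ 2 / 2) * (Real.cos (2 * φ - ξ - ζ) : ℂ) * (besselJ 2 r : ℂ) =
      (1 / 2 : ℂ) * (Real.cos (ξ - ζ) : ℂ) * (besselJ 0 r : ℂ) -
        (1 / 2 : ℂ) * (Real.cos (2 * φ - ξ - ζ) : ℂ) * (besselJ 2 r : ℂ) := by
  refine ⟨?_, by rw [Complex.I_sq]; ring⟩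
  set F : ℝ → ℂ := fun θ => ((Real.cos (θ - ξ) * Real.cos (θ - ζ) : ℝ) : ℂ) *
            Complex.exp (Complex.I * (r : ℂ) * (Real.cos (θ - φ) : ℝ)) with hF
  have hFc : Continuous F := by
    rw [hF]
    fun_prop
  have hper : Function.Periodic F (2 * Real.pi) := by
    intro θ
    simp only [hF, add_sub_right_comm, Real.cos_add_two_pi]
  have hshift : ∫ θ in (0:ℝ)..(2 * Real.pi), F θ
      = ∫ t in (-Real.pi)..Real.pi, F (t + (φ - Real.pi / 2)) := by
    rw [intervalIntegral.integral_comp_add_right (f := F)]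
    have h := hper.intervalIntegral_add_eq 0 (-Real.pi + (φ - Real.pi / 2))
    rw [zero_add] at h
    rw [h]
    congr 1
    ring
  have hfold : ∀ t : ℝ, F (t + (φ - Real.pi / 2)) + F (-t + (φ - Real.pi / 2))
      = ((Real.cos (ξ - ζ) * Real.cos (r * Real.sin t)
          - Real.cos (2 * φ - ξ - ζ) * (Real.cos (2 * t) * Real.cos (r * Real.sin t)) : ℝ) : ℂ)
        + Complex.I * ((Real.sin (2 * φ - ξ - ζ)
          * (Real.sin (2 * t) * Real.sin (r * Real.sin t)) : ℝ) : ℂ) := by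
    intro t
    simp only [hF, integrand_shift, Real.sin_neg, mul_neg, Real.cos_neg]
    push_cast
    ring
  have hint : ∫ θ in (0:ℝ)..(2 * Real.pi), F θ
      = ((Real.cos (ξ - ζ) * (Real.pi * besselJ 0 r)
          - Real.cos (2 * φ - ξ - ζ) * (Real.pi * besselJ 2 r) : ℝ) : ℂ) := by
    rw [hshift, integral_symm_eq_fold _ (by fun_prop)]
    simp only [hfold]
    rw [intervalIntegral.integral_add (Continuous.intervalIntegrable (by fun_prop) _ _)
        (Continuous.intervalIntegrable (by fun_prop) _ _),
      intervalIntegral.integral_const_mul, intervalIntegral.integral_ofReal,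
      intervalIntegral.integral_ofReal, intervalIntegral.integral_const_mul,
      integral_sin_two_mul_sin,
      intervalIntegral.integral_sub (Continuous.intervalIntegrable (by fun_prop) _ _)
        (Continuous.intervalIntegrable (by fun_prop) _ _),
      intervalIntegral.integral_const_mul, intervalIntegral.integral_const_mul,
      pi_mul_besselJ_zero, pi_mul_besselJ_two]
    simp
  have hpi : (Real.pi : ℂ) ≠ 0 := by exact_mod_cast Real.pi_ne_zero
  rw [hint, Complex.I_sq]
  push_cast
  field_simp
  ring
end

section
/- For every real z and every real φ, the series J₀(z) + 2 Σ_{n=1}^{∞} iⁿ Jₙ(z) cos(nφ) converges and its sum equals e^{i z cos φ} (the Jacobi–Anger expansion). -/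
open Complex MeasureTheory intervalIntegral

/-- The Bessel integral `(1/π) ∫₀^π cos(nθ − z sin θ) dθ` for an arbitrary integer order `n`. -/
noncomputable def besselZ (z : ℝ) (n : ℤ) : ℝ :=
  (1 / Real.pi) * ∫ θ in (0:ℝ)..Real.pi, Real.cos (n * θ - z * Real.sin θ)

lemma besselZ_natCast (z : ℝ) (n : ℕ) : besselZ z n = besselJ n z := by
  simp [besselZ, besselJ]

/-- The substitution `θ ↦ π - θ` turns `J₋ₙ` into `(-1)ⁿ Jₙ`. -/
lemma besselZ_neg (z : ℝ) (n : ℕ) : besselZ z (-n) = (-1) ^ n * besselZ z n := by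
  unfold besselZ
  rw [mul_left_comm, ← intervalIntegral.integral_const_mul ((-1 : ℝ) ^ n)]
  congr 1
  have h := integral_comp_sub_left (a := 0) (b := Real.pi)
    (fun θ => Real.cos (((-n : ℤ) : ℝ) * θ - z * Real.sin θ)) Real.pi
  simp only [sub_zero, sub_self] at h
  rw [← h]
  congr 1
  ext θ
  rw [Real.sin_pi_sub]
  have : ((-n : ℤ) : ℝ) * (Real.pi - θ) - z * Real.sin θ
      = (((n : ℤ) : ℝ) * θ - z * Real.sin θ) - n * Real.pi := by
    push_cast; ring
  rw [this, Real.cos_sub_nat_mul_pi]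

lemma abs_besselZ_le_one (z : ℝ) (n : ℤ) : |besselZ z n| ≤ 1 := by
  have h := norm_integral_le_of_norm_le_const (a := 0) (b := Real.pi) (C := 1)
    (f := fun θ => Real.cos (n * θ - z * Real.sin θ))
    (fun x _ => by simpa using Real.abs_cos_le_one _)
  simp only [Real.norm_eq_abs, one_mul, sub_zero, abs_of_pos Real.pi_pos] at h
  rw [besselZ, abs_mul, abs_of_pos (by positivity), one_div, inv_mul_le_iff₀ Real.pi_pos]
  linarith

/-- The three-term recurrence, obtained by integrating the derivative of
`sin (nθ − z sin θ)`, which vanishes at both endpoints. -/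
lemma besselZ_recurrence (z : ℝ) (n : ℤ) :
    n * besselZ z n = z / 2 * (besselZ z (n - 1) + besselZ z (n + 1)) := by
  have hint : ∀ m : ℤ, IntervalIntegrable
      (fun θ : ℝ => Real.cos (m * θ - z * Real.sin θ)) volume 0 Real.pi := fun m =>
    Continuous.intervalIntegrable (by fun_prop) _ _
  have h := integral_eq_sub_of_hasDerivAt (a := 0) (b := Real.pi)
    (f := fun θ : ℝ => Real.sin (n * θ - z * Real.sin θ))
    (f' := fun θ : ℝ => Real.cos (n * θ - z * Real.sin θ) * (n * 1 - z * Real.cos θ))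
    (fun θ _ => (((hasDerivAt_id θ).const_mul (n : ℝ)).sub
      ((Real.hasDerivAt_sin θ).const_mul z)).sin)
    (Continuous.intervalIntegrable (by fun_prop) _ _)
  simp only [Real.sin_pi, mul_zero, sub_zero, Real.sin_int_mul_pi, Real.sin_zero] at h
  have hsplit : (fun θ : ℝ => Real.cos (n * θ - z * Real.sin θ) * (n * 1 - z * Real.cos θ))
      = fun θ => n * Real.cos (n * θ - z * Real.sin θ)
        - z / 2 * (Real.cos ((n - 1 : ℤ) * θ - z * Real.sin θ)
          + Real.cos ((n + 1 : ℤ) * θ - z * Real.sin θ)) := by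
    ext θ
    have h1 : ((n - 1 : ℤ) : ℝ) * θ - z * Real.sin θ = (n * θ - z * Real.sin θ) - θ := by
      push_cast; ring
    have h2 : ((n + 1 : ℤ) : ℝ) * θ - z * Real.sin θ = (n * θ - z * Real.sin θ) + θ := by
      push_cast; ring
    rw [h1, h2, Real.cos_sub (_ - _) θ, Real.cos_add]
    ring
  rw [hsplit, integral_sub ((hint n).const_mul _)
    (((hint (n - 1)).add (hint (n + 1))).const_mul _), intervalIntegral.integral_const_mul, intervalIntegral.integral_const_mul,
    integral_add (hint (n - 1)) (hint (n + 1))] at h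
  unfold besselZ
  linear_combination (1 / Real.pi) * h

lemma sq_mul_abs_besselZ_le (z : ℝ) (n : ℤ) :
    (n : ℝ) ^ 2 * |besselZ z n| ≤ |z| ^ 2 + |z| := by
  have h1 : ∀ m : ℤ, |m * besselZ z m| ≤ |z| := fun m => by
    rw [besselZ_recurrence, abs_mul, abs_div, abs_two]
    have := abs_add_le (besselZ z (m - 1)) (besselZ z (m + 1))
    have := abs_besselZ_le_one z (m - 1)
    have := abs_besselZ_le_one z (m + 1)
    nlinarith [abs_nonneg z]
  have h2 : (n : ℝ) ^ 2 * besselZ z n = z / 2 *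
      ((((n - 1 : ℤ) : ℝ) * besselZ z (n - 1) + besselZ z (n - 1))
        + (((n + 1 : ℤ) : ℝ) * besselZ z (n + 1) - besselZ z (n + 1))) := by
    push_cast
    linear_combination (n : ℝ) * besselZ_recurrence z n
  rw [← abs_of_nonneg (sq_nonneg (n : ℝ)), ← abs_mul, h2, abs_mul, abs_div, abs_two]
  have h3 := h1 (n - 1)
  have h4 := h1 (n + 1)
  have h5 := abs_besselZ_le_one z (n - 1)
  have h6 := abs_besselZ_le_one z (n + 1)
  rw [abs_le] at h3 h4 h5 h6
  have h7 : |(((n - 1 : ℤ) : ℝ) * besselZ z (n - 1) + besselZ z (n - 1))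
        + (((n + 1 : ℤ) : ℝ) * besselZ z (n + 1) - besselZ z (n + 1))| ≤ 2 * |z| + 2 := by
    rw [abs_le]
    constructor <;> linarith
  nlinarith [abs_nonneg z]

lemma summable_besselZ (z : ℝ) : Summable (besselZ z) := by
  have hs : Summable fun n : ℤ => (|z| ^ 2 + |z|) * (1 / (n : ℝ) ^ 2) :=
    (Real.summable_one_div_int_pow.mpr one_lt_two).mul_left _
  refine Summable.of_norm_bounded_eventually hs ?_
  rw [Filter.eventually_cofinite]
  refine (Set.finite_singleton (0 : ℤ)).subset fun n hn => ?_
  by_contra h0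
  apply hn
  have hpos : (0 : ℝ) < (n : ℝ) ^ 2 := by
    have : (n : ℝ) ≠ 0 := by exact_mod_cast h0
    positivity
  rw [Real.norm_eq_abs, mul_one_div, le_div_iff₀ hpos, mul_comm]
  exact sq_mul_abs_besselZ_le z n

instance fact_two_pi_pos : Fact (0 < 2 * Real.pi) := ⟨Real.two_pi_pos⟩

/-- The function `θ ↦ exp (i z sin θ)` on the circle `ℝ / 2πℤ`, with `i sin θ` written as
`(e^{iθ} - e^{-iθ}) / 2`. -/
noncomputable def expSin (z : ℝ) : C(AddCircle (2 * Real.pi), ℂ) where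
  toFun x := Complex.exp (z * ((fourier 1 x - fourier (-1) x) / 2))
  continuous_toFun := by fun_prop

lemma fourier_two_pi (n : ℤ) (θ : ℝ) :
    fourier n (θ : AddCircle (2 * Real.pi)) = Complex.exp (n * θ * I) := by
  rw [fourier_coe_apply]
  congr 1
  have : (Real.pi : ℂ) ≠ 0 := by exact_mod_cast Real.pi_ne_zero
  push_cast
  field_simp

lemma expSin_coe (z θ : ℝ) :
    expSin z (θ : AddCircle (2 * Real.pi)) = Complex.exp ((z * Real.sin θ : ℝ) * I) := by
  simp only [expSin, ContinuousMap.coe_mk, fourier_two_pi]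
  congr 1
  push_cast
  rw [Complex.sin]
  ring_nf
  simp only [I_sq]
  ring

lemma fourierCoeff_expSin (z : ℝ) (n : ℤ) : fourierCoeff (expSin z) n = besselZ z n := by
  have hI : ∀ a b : ℝ, IntervalIntegrable
      (fun θ : ℝ => Complex.exp (-((n * θ - z * Real.sin θ : ℝ) : ℂ) * I)) volume a b :=
    fun a b => Continuous.intervalIntegrable (by fun_prop) _ _
  have hI' : ∀ a b : ℝ, IntervalIntegrable
      (fun θ : ℝ => Complex.exp (((n * θ - z * Real.sin θ : ℝ) : ℂ) * I)) volume a b :=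
    fun a b => Continuous.intervalIntegrable (by fun_prop) _ _
  have hneg := integral_comp_neg (a := 0) (b := Real.pi)
    (fun θ : ℝ => Complex.exp (-((n * θ - z * Real.sin θ : ℝ) : ℂ) * I))
  have hflip : (fun θ : ℝ => Complex.exp (-((n * (-θ) - z * Real.sin (-θ) : ℝ) : ℂ) * I))
      = fun θ : ℝ => Complex.exp (((n * θ - z * Real.sin θ : ℝ) : ℂ) * I) := by
    ext θ
    rw [Real.sin_neg]
    congr 1
    push_cast
    ring
  rw [hflip, neg_zero] at hneg
  have hcos : (fun θ : ℝ => Complex.exp (((n * θ - z * Real.sin θ : ℝ) : ℂ) * I)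
        + Complex.exp (-((n * θ - z * Real.sin θ : ℝ) : ℂ) * I))
      = fun θ : ℝ => 2 * ((Real.cos (n * θ - z * Real.sin θ) : ℝ) : ℂ) := by
    ext θ
    rw [Complex.ofReal_cos, Complex.cos]
    ring
  have hfun : (fun θ : ℝ => fourier (-n) (θ : AddCircle (2 * Real.pi)) • expSin z θ)
      = fun θ : ℝ => Complex.exp (-((n * θ - z * Real.sin θ : ℝ) : ℂ) * I) := by
    ext θ
    rw [fourier_two_pi, expSin_coe, smul_eq_mul, ← Complex.exp_add]
    congr 1
    push_cast
    ring
  rw [fourierCoeff_eq_intervalIntegral _ _ (-Real.pi), hfun,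
    show -Real.pi + 2 * Real.pi = Real.pi by ring,
    ← integral_add_adjacent_intervals (hI (-Real.pi) 0) (hI 0 Real.pi), ← hneg,
    ← integral_add (hI' _ _) (hI _ _), hcos, intervalIntegral.integral_const_mul, integral_ofReal, besselZ,
    Complex.real_smul]
  push_cast
  ring

lemma hasSum_besselZ (z θ : ℝ) :
    HasSum (fun n : ℤ => (besselZ z n : ℂ) * Complex.exp (n * θ * I))
      (Complex.exp ((z * Real.sin θ : ℝ) * I)) := by
  have hs : Summable (fourierCoeff (expSin z)) := by
    rw [funext (fourierCoeff_expSin z)]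
    exact Complex.ofRealCLM.summable (summable_besselZ z)
  have h := has_pointwise_sum_fourier_series_of_summable hs (θ : AddCircle (2 * Real.pi))
  simpa only [fourierCoeff_expSin, fourier_two_pi, smul_eq_mul, expSin_coe] using h

/-- Jacobi–Anger expansion: for every real `z` and `φ`, the series
`J₀(z) + 2 Σ_{n=1}^{∞} iⁿ Jₙ(z) cos(nφ)` converges and its sum is `e^{i z cos φ}`.
(The sum over `n ≥ 1` is indexed here by `n = m + 1`, `m : ℕ`.) -/
theorem stmt5 (z φ : ℝ) :
    HasSum
      (fun m : ℕ =>
        (2 : ℂ) * Complex.I ^ (m + 1) * (besselJ (m + 1) z : ℂ) *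
          (Real.cos ((m + 1 : ℕ) * φ) : ℝ))
      (Complex.exp (Complex.I * (z : ℂ) * (Real.cos φ : ℝ)) - (besselJ 0 z : ℂ)) := by
  have h := (hasSum_besselZ z (φ + Real.pi / 2)).nat_add_neg
  rw [← hasSum_nat_add_iff' 1] at h
  have hpos : ∀ n : ℕ, Complex.exp (n * (φ + Real.pi / 2) * I)
      = I ^ n * Complex.exp (n * φ * I) := fun n => by
    nth_rw 2 [← Complex.exp_pi_div_two_mul_I]
    rw [← Complex.exp_nat_mul, ← Complex.exp_add]
    congr 1
    ring
  have hneg : ∀ n : ℕ, (-1) ^ n * Complex.exp (-n * (φ + Real.pi / 2) * I)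
      = I ^ n * Complex.exp (-(n * φ) * I) := fun n => by
    have h1 : Complex.exp (-n * (φ + Real.pi / 2) * I)
        = (-I) ^ n * Complex.exp (-(n * φ) * I) := by
      rw [← Complex.exp_neg_pi_div_two_mul_I, ← Complex.exp_nat_mul, ← Complex.exp_add]
      congr 1
      ring
    rw [h1, ← mul_assoc, ← mul_pow]
    simp
  have hJ0 : besselZ z 0 = besselJ 0 z := by simpa using besselZ_natCast z 0
  convert! h using 1
  · ext m
    rw [besselZ_neg, besselZ_natCast]
    have e1 := hpos (m + 1)
    have e2 := hneg (m + 1)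
    have e3 : (2 : ℂ) * (Real.cos ((m + 1 : ℕ) * φ) : ℝ)
        = Complex.exp ((m + 1 : ℕ) * φ * I) + Complex.exp (-((m + 1 : ℕ) * φ) * I) := by
      rw [Complex.ofReal_cos, Complex.cos]
      push_cast
      ring
    push_cast at e1 e2 e3 ⊢
    linear_combination (I ^ (m + 1) * (besselJ (m + 1) z : ℂ)) * e3
      - (besselJ (m + 1) z : ℂ) * e1 - (besselJ (m + 1) z : ℂ) * e2
  · rw [Real.sin_add_pi_div_two]
    simp [hJ0]
    ring_nf
end
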